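/- arXiv:1204.0994 — 3 statements merged into one kernel-verified Lean document; each statement's English description precedes it below -/
import Mathlib

section
/- For every integer k ≥ 5, the cubic p_k has exactly three real roots, one in the open interval (0, 1/2), one in (1/2, 1), and one in (k, k+1); in particular all complex roots of p_k are real and pairwise distinct. -/
/-- The polynomial `p_k(x) = x^3 - (k+1)x^2 + kx - 1`. -/
noncomputable def p (k : ℤ) (x : ℝ) : ℝ := x ^ 3 - (k + 1) * x ^ 2 + k * x - 1

/-!
Since `p_t(x) = x(x - 1)(x - t) - 1`, the cubic takes the value `-1` at `0`, `1` and `t`. It is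
positive at `1/2` exactly when `t > 9/2`, and positive at `t + 1` because `t(t + 1) > 1`. The
intermediate value theorem then gives one root in each of three disjoint intervals, and these
exhaust the degree, so `p_t` splits over `ℝ` and acquires no further roots in `ℂ`.
-/

open Polynomial

section RootCounting

variable {R : Type*} [CommRing R] [IsDomain R] {P : R[X]} {s : Finset R}

theorem splits_of_natDegree_le_card_of_ne_zero (hs : ∀ x ∈ s, P.eval x = 0)
    (hcard : P.natDegree ≤ s.card) (hP : P ≠ 0) : P.Splits := by
  have hroots : P.roots = s.val := roots_eq_of_natDegree_le_card_of_ne_zero hs hcard hP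
  refine splits_iff_card_roots.2 (le_antisymm P.card_roots' ?_)
  rwa [hroots, Finset.card_val]

theorem setOf_eval_eq_zero_eq_of_natDegree_le_card (hs : ∀ x ∈ s, P.eval x = 0)
    (hcard : P.natDegree ≤ s.card) (hP : P ≠ 0) : {x | P.eval x = 0} = s := by
  ext x
  rw [Set.mem_ofPred_eq, ← IsRoot.def, ← mem_roots hP,
    roots_eq_of_natDegree_le_card_of_ne_zero hs hcard hP, Finset.mem_val, Finset.mem_coe]

end RootCounting

theorem im_eq_zero_of_splits_of_aeval_eq_zero {P : ℝ[X]} (hsplits : P.Splits) (hP : P ≠ 0)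
    {z : ℂ} (hz : aeval z P = 0) : z.im = 0 := by
  obtain ⟨x, rfl⟩ := hsplits.mem_range_of_isRoot hP
    (i := algebraMap ℝ ℂ) (by rwa [IsRoot.def, eval_map_algebraMap])
  exact Complex.ofReal_im x

/-- The cubic `p_t` as a polynomial, for a parameter `t` in any commutative ring. It is written as
`x(x - 1)(x - t) - 1`, which displays the points where it takes the value `-1`; the expanded form
is `aeval_pPoly`. -/
noncomputable def pPoly {R : Type*} [CommRing R] (t : R) : R[X] :=
  X * (X - 1) * (X - C t) - 1

section CommRing

variable {R : Type*} [CommRing R] (t : R)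

theorem aeval_pPoly {A : Type*} [CommRing A] [Algebra R A] (x : A) :
    aeval x (pPoly t) =
      x ^ 3 - (algebraMap R A t + 1) * x ^ 2 + algebraMap R A t * x - 1 := by
  simp only [pPoly, map_sub, map_mul, map_one, aeval_X, aeval_C]
  ring

theorem eval_pPoly (x : R) : (pPoly t).eval x = x * (x - 1) * (x - t) - 1 := by
  simp [pPoly]

theorem eval_zero_pPoly : (pPoly t).eval 0 = -1 := by simp [eval_pPoly]

theorem eval_one_pPoly : (pPoly t).eval 1 = -1 := by simp [eval_pPoly]

theorem eval_self_pPoly : (pPoly t).eval t = -1 := by simp [eval_pPoly]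

theorem natDegree_pPoly [Nontrivial R] : (pPoly t).natDegree = 3 := by
  unfold pPoly
  compute_degree!

theorem pPoly_ne_zero [Nontrivial R] : pPoly t ≠ 0 :=
  ne_zero_of_natDegree_gt (n := 0) (by simp [natDegree_pPoly])

end CommRing

section OrderedField

variable {K : Type*} [Field K] [LinearOrder K] [IsStrictOrderedRing K] {t : K}

theorem eval_half_pPoly_pos_iff : 0 < (pPoly t).eval (1 / 2) ↔ 9 / 2 < t := by
  have hvalue : (pPoly t).eval (1 / 2) = (t - 9 / 2) / 4 := by rw [eval_pPoly]; ring
  rw [hvalue, div_pos_iff_of_pos_right four_pos, sub_pos]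

theorem eval_add_one_pPoly_pos (ht : 1 ≤ t) : 0 < (pPoly t).eval (t + 1) := by
  rw [eval_pPoly]
  nlinarith

end OrderedField

theorem exists_roots_pPoly_mem_Ioo {t : ℝ} (ht : 9 / 2 < t) :
    ∃ a ∈ Set.Ioo (0 : ℝ) (1 / 2), ∃ b ∈ Set.Ioo (1 / 2 : ℝ) 1, ∃ c ∈ Set.Ioo t (t + 1),
      (pPoly t).eval a = 0 ∧ (pPoly t).eval b = 0 ∧ (pPoly t).eval c = 0 := by
  have hcont {u : Set ℝ} : ContinuousOn (fun x ↦ (pPoly t).eval x) u := (pPoly t).continuousOn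
  have hzero : (pPoly t).eval 0 < 0 := by simp [eval_zero_pPoly]
  have hhalf : 0 < (pPoly t).eval (1 / 2) := eval_half_pPoly_pos_iff.2 ht
  have hone : (pPoly t).eval 1 < 0 := by simp [eval_one_pPoly]
  have hself : (pPoly t).eval t < 0 := by simp [eval_self_pPoly]
  have hadd_one : 0 < (pPoly t).eval (t + 1) := eval_add_one_pPoly_pos (by linarith)
  obtain ⟨a, ha, hPa⟩ := intermediate_value_Ioo (by norm_num) hcont ⟨hzero, hhalf⟩
  obtain ⟨b, hb, hPb⟩ := intermediate_value_Ioo' (by norm_num) hcont ⟨hone, hhalf⟩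
  obtain ⟨c, hc, hPc⟩ := intermediate_value_Ioo (by linarith) hcont ⟨hself, hadd_one⟩
  exact ⟨a, ha, b, hb, c, hc, hPa, hPb, hPc⟩

theorem p_three_real_roots_general (t : ℝ) (ht : 9 / 2 < t) :
    ∃ a b c : ℝ,
      a ∈ Set.Ioo (0 : ℝ) (1 / 2) ∧
      b ∈ Set.Ioo (1 / 2 : ℝ) 1 ∧
      c ∈ Set.Ioo t (t + 1) ∧
      a ≠ b ∧ a ≠ c ∧ b ≠ c ∧
      {x : ℝ | x ^ 3 - (t + 1) * x ^ 2 + t * x - 1 = 0} = {a, b, c} ∧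
      ∀ z : ℂ, z ^ 3 - ((t : ℂ) + 1) * z ^ 2 + (t : ℂ) * z - 1 = 0 → z.im = 0 := by
  obtain ⟨a, ha, b, hb, c, hc, hPa, hPb, hPc⟩ := exists_roots_pPoly_mem_Ioo ht
  have hab : a < b := ha.2.trans hb.1
  have hbc : b < c := by linarith [hb.2, hc.1]
  have hac : a < c := hab.trans hbc
  have hroots : ∀ x ∈ ({a, b, c} : Finset ℝ), (pPoly t).eval x = 0 := by simp [hPa, hPb, hPc]
  have hcard : (pPoly t).natDegree ≤ ({a, b, c} : Finset ℝ).card := by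
    rw [natDegree_pPoly, Finset.card_eq_three.2 ⟨a, b, c, hab.ne, hac.ne, hbc.ne, rfl⟩]
  refine ⟨a, b, c, ha, hb, hc, hab.ne, hac.ne, hbc.ne, ?_, fun z hz ↦ ?_⟩
  · simpa [← coe_aeval_eq_eval, aeval_pPoly] using
      setOf_eval_eq_zero_eq_of_natDegree_le_card hroots hcard (pPoly_ne_zero t)
  · refine im_eq_zero_of_splits_of_aeval_eq_zero
      (splits_of_natDegree_le_card_of_ne_zero hroots hcard (pPoly_ne_zero t)) (pPoly_ne_zero t) ?_
    rwa [aeval_pPoly]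

/-- For every integer `k ≥ 5` the cubic `p_k` has exactly three real roots: one in
`(0, 1/2)`, one in `(1/2, 1)` and one in `(k, k+1)`; moreover all complex roots of
`p_k` are real (and these three roots are pairwise distinct). -/
theorem p_three_real_roots (k : ℤ) (hk : 5 ≤ k) :
    ∃ a b c : ℝ,
      a ∈ Set.Ioo (0 : ℝ) (1 / 2) ∧
      b ∈ Set.Ioo (1 / 2 : ℝ) 1 ∧
      c ∈ Set.Ioo (k : ℝ) ((k : ℝ) + 1) ∧
      a ≠ b ∧ a ≠ c ∧ b ≠ c ∧
      {x : ℝ | p k x = 0} = {a, b, c} ∧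
      ∀ z : ℂ, z ^ 3 - ((k : ℂ) + 1) * z ^ 2 + (k : ℂ) * z - 1 = 0 → z.im = 0 := by
  have hk' : (9 / 2 : ℝ) < k := lt_of_lt_of_le (by norm_num) (Int.cast_le.2 hk)
  simpa only [p, Complex.ofReal_intCast] using p_three_real_roots_general k hk'
end

section
/- For every integer k ≥ 5, the matrix A_k has three distinct real eigenvalues λ^s_k < λ^c_k < λ^u_k satisfying 0 < λ^s_k < 1/2 < λ^c_k < 1 < k < λ^u_k < k+1, their product equals 1, and hence λ^s_k = 1/(λ^c_k · λ^u_k). -/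
/-- The matrix `A_k` with rows `(0,0,1)`, `(0,1,-1)`, `(-1,-1,k)`. -/
def A (k : ℤ) : Matrix (Fin 3) (Fin 3) ℤ := !![0, 0, 1; 0, 1, -1; -1, -1, k]

/-- `μ` is a (real) eigenvalue of the real matrix induced by `A_k`. -/
def IsEigenvalueOfA (k : ℤ) (μ : ℝ) : Prop :=
  ∃ v : Fin 3 → ℝ, v ≠ 0 ∧ ((A k).map (Int.cast : ℤ → ℝ)).mulVec v = μ • v

/-! `A_k` has determinant `1` and characteristic polynomial `p_k = x^3 - (k+1)x^2 + kx - 1`. The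
values of `p_k` at `0, 1/2, 1, k, k+1` are `-1, (2k-9)/8, -1, -1, k(k+1)-1`, so for `k > 9/2` the
sign changes give three distinct roots; being as many as the size of the matrix, they are all the
eigenvalues, and their product is the determinant. -/

open Matrix Module.End Polynomial

section DistinctEigenvalues

variable {n R : Type*} [Fintype n] [DecidableEq n] [CommRing R] [IsDomain R]
  {M : Matrix n n R} {S : Finset R}

theorem hasEigenvalue_toLin'_iff_isRoot_charpoly {μ : R} :
    HasEigenvalue M.toLin' μ ↔ M.charpoly.IsRoot μ := by
  rw [hasEigenvalue_iff_isRoot_charpoly, charpoly_toLin']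

theorem roots_charpoly_eq_of_card_eq (hS : ∀ μ ∈ S, M.charpoly.IsRoot μ)
    (hcard : S.card = Fintype.card n) : M.charpoly.roots = S.val :=
  roots_eq_of_natDegree_le_card_of_ne_zero hS
    (by rw [charpoly_natDegree_eq_dim, hcard]) M.charpoly_monic.ne_zero

theorem hasEigenvalue_iff_mem_of_card_eq (hS : ∀ μ ∈ S, M.charpoly.IsRoot μ)
    (hcard : S.card = Fintype.card n) {μ : R} : HasEigenvalue M.toLin' μ ↔ μ ∈ S := by
  rw [hasEigenvalue_toLin'_iff_isRoot_charpoly, ← mem_roots M.charpoly_monic.ne_zero,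
    roots_charpoly_eq_of_card_eq hS hcard, Finset.mem_val]

theorem det_eq_prod_of_card_eq (hS : ∀ μ ∈ S, M.charpoly.IsRoot μ)
    (hcard : S.card = Fintype.card n) : M.det = ∏ μ ∈ S, μ := by
  have hroots := roots_charpoly_eq_of_card_eq hS hcard
  have hsplits : M.charpoly.Splits := by
    rw [splits_iff_card_roots, hroots, charpoly_natDegree_eq_dim, ← hcard, Finset.card_val]
  rw [det_eq_prod_roots_charpoly_of_splits hsplits, hroots]
  exact Finset.prod_val S

end DistinctEigenvalues

theorem exists_isRoot_mem_Ioo_of_eval_neg_of_eval_pos {p : ℝ[X]} {a b : ℝ} (hab : a ≤ b)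
    (ha : p.eval a < 0) (hb : 0 < p.eval b) : ∃ x ∈ Set.Ioo a b, p.IsRoot x :=
  intermediate_value_Ioo hab p.continuousOn ⟨ha, hb⟩

theorem exists_isRoot_mem_Ioo_of_eval_pos_of_eval_neg {p : ℝ[X]} {a b : ℝ} (hab : a ≤ b)
    (ha : 0 < p.eval a) (hb : p.eval b < 0) : ∃ x ∈ Set.Ioo a b, p.IsRoot x :=
  intermediate_value_Ioo' hab p.continuousOn ⟨hb, ha⟩

section ParametricA

variable {R : Type*} [CommRing R]

/-- The matrix `A_t` with its parameter `t`, and hence its entries, in an arbitrary commutative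
ring; the real matrix induced by `A k` is `parametricA (k : ℝ)`. -/
def parametricA (t : R) : Matrix (Fin 3) (Fin 3) R := !![0, 0, 1; 0, 1, -1; -1, -1, t]

theorem map_A_intCast (k : ℤ) : (A k).map (Int.cast : ℤ → R) = parametricA (k : R) := by
  ext i j
  fin_cases i <;> fin_cases j <;> simp [A, parametricA]

theorem isEigenvalueOfA_iff_hasEigenvalue (k : ℤ) (μ : ℝ) :
    IsEigenvalueOfA k μ ↔ HasEigenvalue (parametricA (k : ℝ)).toLin' μ := by
  simp only [IsEigenvalueOfA, map_A_intCast, HasEigenvalue, HasUnifEigenvalue,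
    Submodule.ne_bot_iff, mem_eigenspace_iff, toLin'_apply, and_comm]

theorem det_parametricA (t : R) : (parametricA t).det = 1 := by
  simp [parametricA, det_fin_three]

theorem eval_charpoly_parametricA (t x : R) :
    (parametricA t).charpoly.eval x = x ^ 3 - (t + 1) * x ^ 2 + t * x - 1 := by
  have hsub : scalar (Fin 3) x - parametricA t = !![x, 0, -1; 0, x - 1, 1; 1, 1, x - t] := by
    ext i j
    fin_cases i <;> fin_cases j <;> simp [parametricA]
  rw [eval_charpoly, hsub, det_fin_three]
  simp only [of_apply, cons_val]
  ring

end ParametricA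

section RealParameter

variable {t : ℝ}

theorem exists_isRoot_charpoly_parametricA_mem_Ioo_zero_half (ht : 9 / 2 < t) :
    ∃ s ∈ Set.Ioo 0 (1 / 2), (parametricA t).charpoly.IsRoot s := by
  apply exists_isRoot_mem_Ioo_of_eval_neg_of_eval_pos (by norm_num) <;>
    rw [eval_charpoly_parametricA] <;> linarith

theorem exists_isRoot_charpoly_parametricA_mem_Ioo_half_one (ht : 9 / 2 < t) :
    ∃ c ∈ Set.Ioo (1 / 2) 1, (parametricA t).charpoly.IsRoot c := by
  apply exists_isRoot_mem_Ioo_of_eval_pos_of_eval_neg (by norm_num) <;>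
    rw [eval_charpoly_parametricA] <;> linarith

theorem exists_isRoot_charpoly_parametricA_mem_Ioo_self_add_one (ht : 1 < t * (t + 1)) :
    ∃ u ∈ Set.Ioo t (t + 1), (parametricA t).charpoly.IsRoot u := by
  apply exists_isRoot_mem_Ioo_of_eval_neg_of_eval_pos (by linarith) <;>
    rw [eval_charpoly_parametricA] <;> linarith

end RealParameter

theorem eigenvalues_of_A_general (t : ℝ) (ht : 9 / 2 < t) :
    ∃ s c u : ℝ,
      HasEigenvalue (parametricA t).toLin' s ∧ HasEigenvalue (parametricA t).toLin' c ∧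
      HasEigenvalue (parametricA t).toLin' u ∧
      s < c ∧ c < u ∧
      0 < s ∧ s < 1 / 2 ∧ 1 / 2 < c ∧ c < 1 ∧ 1 < t ∧
      t < u ∧ u < t + 1 ∧
      s * c * u = 1 ∧ s = 1 / (c * u) ∧
      ∀ μ : ℝ, HasEigenvalue (parametricA t).toLin' μ → μ = s ∨ μ = c ∨ μ = u := by
  obtain ⟨s, ⟨s_pos, s_lt⟩, hs⟩ := exists_isRoot_charpoly_parametricA_mem_Ioo_zero_half ht
  obtain ⟨c, ⟨lt_c, c_lt⟩, hc⟩ := exists_isRoot_charpoly_parametricA_mem_Ioo_half_one ht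
  have ht' : 1 < t * (t + 1) := by nlinarith
  obtain ⟨u, ⟨lt_u, u_lt⟩, hu⟩ := exists_isRoot_charpoly_parametricA_mem_Ioo_self_add_one ht'
  have s_lt_c : s < c := s_lt.trans lt_c
  have c_lt_u : c < u := by linarith
  have hroots : ∀ μ ∈ ({s, c, u} : Finset ℝ), (parametricA t).charpoly.IsRoot μ := by
    simp [hs.eq_zero, hc.eq_zero, hu.eq_zero]
  have hcard : ({s, c, u} : Finset ℝ).card = Fintype.card (Fin 3) :=
    Finset.card_eq_three.mpr ⟨s, c, u, s_lt_c.ne, (s_lt_c.trans c_lt_u).ne, c_lt_u.ne, rfl⟩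
  have heigen (μ : ℝ) : HasEigenvalue (parametricA t).toLin' μ ↔ μ = s ∨ μ = c ∨ μ = u := by
    simp [hasEigenvalue_iff_mem_of_card_eq hroots hcard]
  have hprod : s * c * u = 1 := by
    rw [← det_parametricA t, det_eq_prod_of_card_eq hroots hcard, Finset.prod_insert,
      Finset.prod_pair c_lt_u.ne, mul_assoc]
    simp [s_lt_c.ne, (s_lt_c.trans c_lt_u).ne]
  exact ⟨s, c, u, by simp [heigen], by simp [heigen], by simp [heigen], s_lt_c, c_lt_u, s_pos,
    s_lt, lt_c, c_lt, by linarith, lt_u, u_lt, hprod,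
    eq_one_div_of_mul_eq_one_left (mul_assoc s c u ▸ hprod), fun μ => (heigen μ).mp⟩

/-- For every `k ≥ 5`, `A_k` has three distinct real eigenvalues
`λ^s_k < λ^c_k < λ^u_k` with `0 < λ^s_k < 1/2 < λ^c_k < 1 < k < λ^u_k < k+1`,
product equal to `1`, and hence `λ^s_k = 1/(λ^c_k · λ^u_k)`; moreover every real
eigenvalue of `A_k` is one of these three. -/
theorem eigenvalues_of_A (k : ℤ) (hk : 5 ≤ k) :
    ∃ s c u : ℝ,
      IsEigenvalueOfA k s ∧ IsEigenvalueOfA k c ∧ IsEigenvalueOfA k u ∧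
      s < c ∧ c < u ∧
      0 < s ∧ s < 1 / 2 ∧ 1 / 2 < c ∧ c < 1 ∧ 1 < (k : ℝ) ∧
      (k : ℝ) < u ∧ u < (k : ℝ) + 1 ∧
      s * c * u = 1 ∧ s = 1 / (c * u) ∧
      ∀ μ : ℝ, IsEigenvalueOfA k μ → μ = s ∨ μ = c ∨ μ = u := by
  have hk' : (5 : ℝ) ≤ k := mod_cast hk
  simpa only [isEigenvalueOfA_iff_hasEigenvalue] using eigenvalues_of_A_general k (by linarith)
end

section
/- Let V be a real inner product space, let E and F be subspaces of V with V the orthogonal direct sum of E and F, and let T : V → V be a linear map with T(E) ⊆ E and T(F) ⊆ F. Let β > 0 and λ₂ ≥ 0, and suppose there is a constant c ≥ (1+β)·λ₂ such that ‖T w‖ ≥ c‖w‖ for all w ∈ F. Then for every v in the cone C(F, β) = { u + w : u ∈ E, w ∈ F, ‖u‖ ≤ β‖w‖ } one has ‖T v‖ ≥ λ₂‖v‖. -/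
open RealInnerProductSpace

variable {V : Type*} [NormedAddCommGroup V] [InnerProductSpace ℝ V]

/-- The cone centered at the subspace `F` (with complementary subspace `E`)
with angle `β`: vectors `v = u + w`, `u ∈ E`, `w ∈ F`, with `‖u‖ ≤ β‖w‖`. -/
def cone (E F : Submodule ℝ V) (β : ℝ) : Set V :=
  {v | ∃ u ∈ E, ∃ w ∈ F, v = u + w ∧ ‖u‖ ≤ β * ‖w‖}

theorem norm_add_le_one_add_mul_norm {G : Type*} [SeminormedAddGroup G] {x y : G} {r : ℝ}
    (h : ‖x‖ ≤ r * ‖y‖) : ‖x + y‖ ≤ (1 + r) * ‖y‖ :=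
  calc ‖x + y‖ ≤ r * ‖y‖ + ‖y‖ := norm_add_le_of_le h le_rfl
    _ = (1 + r) * ‖y‖ := by ring

theorem norm_le_norm_add_of_re_inner_nonneg {𝕜 W : Type*} [RCLike 𝕜] [SeminormedAddCommGroup W]
    [InnerProductSpace 𝕜 W] {x y : W} (h : 0 ≤ RCLike.re (inner 𝕜 x y)) : ‖y‖ ≤ ‖x + y‖ := by
  refine le_of_sq_le_sq ?_ (norm_nonneg _)
  calc ‖y‖ ^ 2 ≤ ‖x‖ ^ 2 + 2 * RCLike.re (inner 𝕜 x y) + ‖y‖ ^ 2 :=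
        le_add_of_nonneg_left (by positivity)
    _ = ‖x + y‖ ^ 2 := (norm_add_sq x y).symm

theorem expansion_on_cone_general {W : Type*} [SeminormedAddCommGroup W] [InnerProductSpace ℝ W]
    (E F : Submodule ℝ V) (T : V →ₗ[ℝ] W) (hT : ∀ u ∈ E, ∀ w ∈ F, ⟪T u, T w⟫ = 0)
    (β lam2 c : ℝ) (hlam2 : 0 ≤ lam2) (hc : (1 + β) * lam2 ≤ c)
    (hF : ∀ w ∈ F, c * ‖w‖ ≤ ‖T w‖) :
    ∀ v ∈ cone E F β, lam2 * ‖v‖ ≤ ‖T v‖ := by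
  rintro _ ⟨u, hu, w, hw, rfl, huw⟩
  calc lam2 * ‖u + w‖ ≤ lam2 * ((1 + β) * ‖w‖) := by
        gcongr
        exact norm_add_le_one_add_mul_norm huw
    _ = (1 + β) * lam2 * ‖w‖ := by ring
    _ ≤ c * ‖w‖ := by gcongr
    _ ≤ ‖T w‖ := hF w hw
    _ ≤ ‖T u + T w‖ := norm_le_norm_add_of_re_inner_nonneg (𝕜 := ℝ) (hT u hu w hw).ge
    _ = ‖T (u + w)‖ := by rw [map_add]

/-- Let `V = E ⊕ F` be an orthogonal direct sum and `T` a linear map preserving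
`E` and `F`. If `T` expands `F` by at least `c ≥ (1+β)·λ₂`, then `T` expands
every vector of the cone `C(F, β)` by at least `λ₂`. -/
theorem expansion_on_cone (E F : Submodule ℝ V)
    (horth : ∀ u ∈ E, ∀ w ∈ F, ⟪u, w⟫ = 0) (hcompl : IsCompl E F)
    (T : V →ₗ[ℝ] V) (hTE : ∀ u ∈ E, T u ∈ E) (hTF : ∀ w ∈ F, T w ∈ F)
    (β lam2 c : ℝ) (hβ : 0 < β) (hlam2 : 0 ≤ lam2)
    (hc : (1 + β) * lam2 ≤ c) (hF : ∀ w ∈ F, c * ‖w‖ ≤ ‖T w‖) :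
    ∀ v ∈ cone E F β, lam2 * ‖v‖ ≤ ‖T v‖ :=
  expansion_on_cone_general E F T (fun u hu w hw ↦ horth _ (hTE u hu) _ (hTF w hw))
    β lam2 c hlam2 hc hF
end
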